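/- For every infinite binary sequence x ∈ B^ℕ, 2·γ̄(x) ≤ h̄(x) ≤ H(γ̄(x)). -/

import Mathlib

open Filter Topology

/-- The factor of length `len` of the sequence `x` starting at position `i`. -/
def factor (x : ℕ → Bool) (i len : ℕ) : List Bool :=
  List.ofFn (fun j : Fin len => x (i + j))

/-- Number of (possibly overlapping) occurrences of the word `u`
in the prefix `x[0:n)` of the sequence `x`. -/
def occ (x : ℕ → Bool) (n : ℕ) (u : List Bool) : ℕ :=
  ((Finset.range (n + 1 - u.length)).filter (fun i => factor x i u.length = u)).card

/-- Non-aligned `ℓ`-block entropy of the prefix `x[0:n)`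
(logs are base 2, with the convention `0 · log 0 = 0`). -/
noncomputable def hBlock (ℓ : ℕ) (x : ℕ → Bool) (n : ℕ) : ℝ :=
  -(1 / (ℓ : ℝ)) * ∑ u : Fin ℓ → Bool,
    ((occ x n (List.ofFn u) : ℝ) / ((n : ℝ) - ℓ + 1)) *
      Real.logb 2 ((occ x n (List.ofFn u) : ℝ) / ((n : ℝ) - ℓ + 1))

/-- `h̲(x) = lim_{ℓ→∞} liminf_{n→∞} h_ℓ(x[0:n))` (the limit in `ℓ` exists). -/
noncomputable def hLow (x : ℕ → Bool) : ℝ :=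
  atTop.liminf fun ℓ => atTop.liminf fun n => hBlock ℓ x n

/-- `h̄(x) = lim_{ℓ→∞} limsup_{n→∞} h_ℓ(x[0:n))` (the limit in `ℓ` exists). -/
noncomputable def hUp (x : ℕ → Bool) : ℝ :=
  atTop.limsup fun ℓ => atTop.limsup fun n => hBlock ℓ x n

/-- `γ_ℓ(x[0:n))`: normalized minimal number of prediction errors when predicting
`x[i]` from the preceding `ℓ` symbols `x[i-ℓ:i)`, for `i ∈ {ℓ,…,n-1}`. -/
noncomputable def gammaWord (ℓ : ℕ) (x : ℕ → Bool) (n : ℕ) : ℝ :=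
  (1 / ((n : ℝ) - ℓ)) *
    ((Finset.univ : Finset ((Fin ℓ → Bool) → Bool)).inf' Finset.univ_nonempty
      (fun f => ((((Finset.Ico ℓ n).filter
        (fun i => x i ≠ f (fun j => x (i - ℓ + j)))).card : ℝ))))

/-- `β_ℓ(x[0:n))`: normalized minimal number of prediction errors when predicting
`x[i]` from the following `ℓ` symbols `x[i+1:i+ℓ+1)`, for `i ∈ {0,…,n-ℓ-1}`. -/
noncomputable def betaWord (ℓ : ℕ) (x : ℕ → Bool) (n : ℕ) : ℝ :=
  (1 / ((n : ℝ) - ℓ)) *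
    ((Finset.univ : Finset ((Fin ℓ → Bool) → Bool)).inf' Finset.univ_nonempty
      (fun f => ((((Finset.range (n - ℓ)).filter
        (fun i => x i ≠ f (fun j => x (i + 1 + j)))).card : ℝ))))

/-- `γ̲(x) = lim_{ℓ→∞} liminf_{n→∞} γ_ℓ(x[0:n))` (the limit in `ℓ` exists, by monotonicity). -/
noncomputable def gammaLow (x : ℕ → Bool) : ℝ :=
  atTop.liminf fun ℓ => atTop.liminf fun n => gammaWord ℓ x n

/-- `γ̄(x) = lim_{ℓ→∞} limsup_{n→∞} γ_ℓ(x[0:n))` (the limit in `ℓ` exists, by monotonicity). -/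
noncomputable def gammaUp (x : ℕ → Bool) : ℝ :=
  atTop.limsup fun ℓ => atTop.limsup fun n => gammaWord ℓ x n

/-- `β̲(x) = lim_{ℓ→∞} liminf_{n→∞} β_ℓ(x[0:n))` (the limit in `ℓ` exists, by monotonicity). -/
noncomputable def betaLow (x : ℕ → Bool) : ℝ :=
  atTop.liminf fun ℓ => atTop.liminf fun n => betaWord ℓ x n

/-- `β̄(x) = lim_{ℓ→∞} limsup_{n→∞} β_ℓ(x[0:n))` (the limit in `ℓ` exists, by monotonicity). -/
noncomputable def betaUp (x : ℕ → Bool) : ℝ :=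
  atTop.limsup fun ℓ => atTop.limsup fun n => betaWord ℓ x n

/-- Binary Shannon entropy function `H(α) = -α log α - (1-α) log (1-α)` (base-2 logs). -/
noncomputable def binEntropy (a : ℝ) : ℝ :=
  -(a * Real.logb 2 a) - (1 - a) * Real.logb 2 (1 - a)

/-- Conditional block entropy `Hc^{n,ℓ}(x)`:
`-Σ_{ā ∈ B^ℓ, a ∈ B, p(ā·a) > 0} p(ā·a) · log (p(ā·a)/p(ā))`, where
`p(ā) = occ(x[0:n-1), ā)/(n-ℓ)` and `p(ā·a) = occ(x[0:n), ā·a)/(n-ℓ)`. -/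
noncomputable def condEntropy (ℓ : ℕ) (x : ℕ → Bool) (n : ℕ) : ℝ :=
  -∑ u : Fin ℓ → Bool, ∑ a : Bool,
    (if 0 < ((occ x n (List.ofFn u ++ [a]) : ℝ) / ((n : ℝ) - ℓ)) then
      ((occ x n (List.ofFn u ++ [a]) : ℝ) / ((n : ℝ) - ℓ)) *
        Real.logb 2 (((occ x n (List.ofFn u ++ [a]) : ℝ) / ((n : ℝ) - ℓ)) /
          ((occ x (n - 1) (List.ofFn u) : ℝ) / ((n : ℝ) - ℓ)))
    else 0)

/-- The real number in `[0,1]` denoted by the binary sequence `x`. -/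
noncomputable def val (x : ℕ → Bool) : ℝ :=
  ∑' n : ℕ, (if x n then (1 : ℝ) else 0) / 2 ^ (n + 1)

/-!
Let `θ_u` be the frequency of `1` among the letters that follow the occurrences of a word `u`.
The best predictor from `u` errs with frequency `min θ_u (1 - θ_u)`, and the chain rule writes the
entropy of the windows of length `ℓ` as the sum over `k < ℓ` of the means, over the words `u` of
length `k`, of `H(θ_u)`. On `[0, 1]` one has `2 min θ (1 - θ) ≤ H(θ) = H(min θ (1 - θ))`, and `H`
is concave; so the `k`-th term lies between `2 γ_k` and `H(γ_k)`. Averaging over `k < ℓ` gives the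
upper bound by Cesàro, and the lower bound because a longer window predicts at least as well, up to
boundary effects of order `ℓ / n`.
-/

section Limsup

variable {ι R : Type*} [ConditionallyCompleteLinearOrder R] {F : Filter ι} [F.NeBot]

lemma limsup_finset_sum_le [AddCommGroup R] [DenselyOrdered R] [AddLeftMono R] {κ : Type*}
    (s : Finset κ) {u : κ → ι → R} (hle : ∀ k ∈ s, F.IsBoundedUnder (· ≤ ·) (u k))
    (hge : ∀ k ∈ s, F.IsBoundedUnder (· ≥ ·) (u k)) :
    limsup (∑ k ∈ s, u k) F ≤ ∑ k ∈ s, limsup (u k) F := by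
  classical
  induction s using Finset.induction_on with
  | empty => simp [Pi.zero_def]
  | insert k s hk ih =>
    simp only [Finset.forall_mem_insert] at hle hge
    rw [Finset.sum_insert hk, Finset.sum_insert hk]
    exact (limsup_add_le hge.1 hle.1 (isBoundedUnder_ge_sum s hge.2).isCoboundedUnder_le
      (isBoundedUnder_le_sum s hle.2)).trans (by gcongr; exact ih hle.2 hge.2)

variable [TopologicalSpace R] [OrderTopology R]

lemma limsup_mem_Icc_of_tendsto {u v w : ι → R} {a b : R} (hu : Tendsto u F (𝓝 a))
    (hw : Tendsto w F (𝓝 b)) (huv : ∀ᶠ i in F, u i ≤ v i) (hvw : ∀ᶠ i in F, v i ≤ w i) :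
    limsup v F ∈ Set.Icc a b := by
  have hv_le : F.IsBoundedUnder (· ≤ ·) v := hw.isBoundedUnder_le.mono_le hvw
  have hv_ge : F.IsBoundedUnder (· ≥ ·) v := hu.isBoundedUnder_ge.mono_ge huv
  constructor
  · rw [← hu.limsup_eq]
    exact limsup_le_limsup huv hu.isCoboundedUnder_le hv_le
  · rw [← hw.limsup_eq]
    exact limsup_le_limsup hvw hv_ge.isCoboundedUnder_le hw.isBoundedUnder_le

lemma limsup_le_limsup_of_le_add_tendsto_zero [AddCommGroup R] [DenselyOrdered R]
    [AddLeftMono R] {u v e : ι → R} (hu : F.IsCoboundedUnder (· ≤ ·) u)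
    (hv_le : F.IsBoundedUnder (· ≤ ·) v) (hv_ge : F.IsBoundedUnder (· ≥ ·) v)
    (he : Tendsto e F (𝓝 0)) (h : ∀ᶠ i in F, u i ≤ v i + e i) :
    limsup u F ≤ limsup v F :=
  calc limsup u F ≤ limsup (v + e) F :=
        limsup_le_limsup h hu (isBoundedUnder_le_add hv_le he.isBoundedUnder_le)
    _ ≤ limsup v F + limsup e F :=
        limsup_add_le hv_ge hv_le he.isCoboundedUnder_le he.isBoundedUnder_le
    _ = limsup v F := by rw [he.limsup_eq, add_zero]

lemma limsup_mul_const_of_nonneg [MonoidWithZero R] [MulPosMono R] [ContinuousMul R] {u : ι → R}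
    {c : R} (hc : 0 ≤ c) (hle : F.IsBoundedUnder (· ≤ ·) u) (hge : F.IsBoundedUnder (· ≥ ·) u) :
    limsup (fun i => u i * c) F = limsup u F * c :=
  ((monotone_mul_right_of_nonneg hc).map_limsup_of_continuousAt u
    (continuous_mul_const c).continuousAt hle hge.isCoboundedUnder_le).symm

lemma limsup_mem_Icc {u : ι → R} {a b : R} (hu : ∀ i, u i ∈ Set.Icc a b) :
    limsup u F ∈ Set.Icc a b :=
  limsup_mem_Icc_of_tendsto tendsto_const_nhds tendsto_const_nhds
    (Eventually.of_forall fun i => (hu i).1) (Eventually.of_forall fun i => (hu i).2)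

lemma map_limsup_of_monotoneOn_Icc {S : Type*} [ConditionallyCompleteLinearOrder S]
    [TopologicalSpace S] [OrderTopology S] {φ : R → S} {a b : R}
    (hφ : MonotoneOn φ (Set.Icc a b)) (hcont : ContinuousOn φ (Set.Icc a b)) {u : ι → R}
    (hu : ∀ i, u i ∈ Set.Icc a b) :
    φ (limsup u F) = limsup (fun i => φ (u i)) F := by
  obtain ⟨i₀⟩ := F.nonempty_of_neBot
  have hab : a ≤ b := (hu i₀).1.trans (hu i₀).2
  -- `Monotone.map_limsup_of_continuousAt` needs global monotonicity, so `φ` is extended by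
  -- constants outside `[a, b]`.
  set ψ : R → S := fun y => φ (Set.projIcc a b hab y)
  have hψ_mono : Monotone ψ := fun _ _ h =>
    hφ (Subtype.coe_prop _) (Subtype.coe_prop _) (Set.monotone_projIcc hab h)
  have hψ_cont : Continuous ψ := hcont.comp_continuous
    (continuous_subtype_val.comp continuous_projIcc) fun _ => Subtype.coe_prop _
  have hψ_eq : ∀ y ∈ Set.Icc a b, ψ y = φ y := fun y hy => by
    simp only [ψ, Set.projIcc_of_mem hab hy]
  have hmap := hψ_mono.map_limsup_of_continuousAt (F := F) u hψ_cont.continuousAt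
    (isBoundedUnder_of ⟨b, fun i => (hu i).2⟩)
    (isCoboundedUnder_le_of_le F fun i => (hu i).1)
  simpa only [Function.comp_def, hψ_eq _ (hu _), hψ_eq _ (limsup_mem_Icc hu)] using hmap

end Limsup

section BinaryEntropy

lemma binEntropy_eq_div_log_two (p : ℝ) : binEntropy p = Real.binEntropy p / Real.log 2 := by
  rw [Real.binEntropy_eq_negMulLog_add_negMulLog_one_sub]
  simp only [binEntropy, Real.negMulLog, Real.logb]
  ring

lemma continuous_binEntropy : Continuous binEntropy := by
  simpa only [funext binEntropy_eq_div_log_two] using Real.binEntropy_continuous.div_const _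

lemma binEntropy_min_one_sub (p : ℝ) : Real.binEntropy (min p (1 - p)) = Real.binEntropy p := by
  rcases min_choice p (1 - p) with h | h <;> simp [h]

lemma two_mul_log_two_mul_min_le_binEntropy {p : ℝ} (hp : p ∈ Set.Icc (0 : ℝ) 1) :
    2 * Real.log 2 * min p (1 - p) ≤ Real.binEntropy p := by
  set q := min p (1 - p) with hq
  have hq0 : 0 ≤ q := le_min hp.1 (sub_nonneg.2 hp.2)
  have hq1 : 2 * q ≤ 1 := by linarith [min_le_left p (1 - p), min_le_right p (1 - p)]
  have chord := Real.strictConcave_binEntropy.concaveOn.2 (x := 0) (y := 2⁻¹) (by norm_num)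
    (by norm_num) (sub_nonneg.2 hq1) (mul_nonneg zero_le_two hq0) (sub_add_cancel 1 (2 * q))
  have hmid : (1 - 2 * q) • (0 : ℝ) + (2 * q) • (2⁻¹ : ℝ) = q := by
    simp only [smul_eq_mul]
    ring
  rw [hmid, Real.binEntropy_zero, Real.binEntropy_two_inv, hq, binEntropy_min_one_sub] at chord
  simp only [smul_eq_mul] at chord
  linarith

lemma negMulLog_add_negMulLog (p q : ℝ) :
    Real.negMulLog p + Real.negMulLog q =
      Real.negMulLog (p + q) + (p + q) * Real.binEntropy (p / (p + q)) := by
  rcases eq_or_ne (p + q) 0 with h | h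
  · obtain rfl : q = -p := by linarith
    simp [Real.negMulLog]
  · have hp : (p + q) * (p / (p + q)) = p := mul_div_cancel₀ p h
    have hq : (p + q) * (1 - p / (p + q)) = q := by rw [mul_sub, hp]; ring
    have hp' := Real.negMulLog_mul (p + q) (p / (p + q))
    have hq' := Real.negMulLog_mul (p + q) (1 - p / (p + q))
    rw [hp] at hp'
    rw [hq] at hq'
    rw [Real.binEntropy_eq_negMulLog_add_negMulLog_one_sub, hp', hq']
    ring

end BinaryEntropy

section Windows

variable {α : Type*}

/-- The word of length `ℓ` read in `x` from position `i`, that is `factor x i ℓ` as a tuple. -/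
def window (x : ℕ → α) (ℓ i : ℕ) : Fin ℓ → α := fun j => x (i + j)

lemma window_succ (x : ℕ → α) (ℓ i : ℕ) :
    window x (ℓ + 1) i = Fin.snoc (window x ℓ i) (x (i + ℓ)) := by
  funext j
  refine Fin.lastCases ?_ (fun j => ?_) j <;> simp [window]

lemma sum_fin_succ_eq_sum_snoc [Fintype α] {M : Type*} [AddCommMonoid M] (ℓ : ℕ)
    (g : (Fin (ℓ + 1) → α) → M) :
    ∑ v, g v = ∑ u : Fin ℓ → α, ∑ a, g (Fin.snoc u a) := by
  rw [← (Fin.snocEquiv fun _ => α).sum_comp, Fintype.sum_prod_type_right]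
  rfl

variable [DecidableEq α]

/-- The number of positions `i < N` at which the word `u` occurs in `x`. The range of `i` does not
depend on the length of `u`, which makes the counts of a word and of its extensions consistent. -/
def windowCount (x : ℕ → α) (ℓ N : ℕ) (u : Fin ℓ → α) : ℕ :=
  Nat.count (fun i => window x ℓ i = u) N

/-- The frequency of the word `u` among the windows starting before `N`; it is `0` for `N = 0`. -/
noncomputable def windowFreq (x : ℕ → α) (ℓ N : ℕ) (u : Fin ℓ → α) : ℝ :=
  windowCount x ℓ N u / N

/-- The number of positions `i < N` at which the predictor `f` fails to guess `x (i + ℓ)` from the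
`ℓ` preceding letters. -/
def predictionErrors (x : ℕ → α) (ℓ N : ℕ) (f : (Fin ℓ → α) → α) : ℕ :=
  Nat.count (fun i => x (i + ℓ) ≠ f (window x ℓ i)) N

lemma windowFreq_nonneg (x : ℕ → α) (ℓ N : ℕ) (u : Fin ℓ → α) : 0 ≤ windowFreq x ℓ N u := by
  unfold windowFreq
  positivity

lemma windowCount_snoc (x : ℕ → α) (ℓ N : ℕ) (u : Fin ℓ → α) (a : α) :
    windowCount x (ℓ + 1) N (Fin.snoc u a) =
      Nat.count (fun i => window x ℓ i = u ∧ x (i + ℓ) = a) N := by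
  simp only [windowCount, window_succ, Fin.snoc_inj]

lemma predictionErrors_natAdd_le (x : ℕ → α) (d ℓ N : ℕ) (f : (Fin ℓ → α) → α) :
    predictionErrors x (d + ℓ) N (fun v => f fun j => v (Fin.natAdd d j)) ≤
      predictionErrors x ℓ N f + d := by
  let p : ℕ → Prop := fun i => x (i + ℓ) ≠ f fun j => x (i + j)
  have shift : predictionErrors x (d + ℓ) N (fun v => f fun j => v (Fin.natAdd d j)) =
      Nat.count (fun i => p (d + i)) N := by
    simp only [predictionErrors, window, p, Fin.val_natAdd, Nat.add_left_comm, Nat.add_assoc]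
  calc _ = Nat.count (fun i => p (d + i)) N := shift
    _ ≤ Nat.count p (d + N) := by rw [Nat.count_add]; exact Nat.le_add_left _ _
    _ = Nat.count p N + Nat.count (fun i => p (N + i)) d := by rw [Nat.add_comm, Nat.count_add]
    _ ≤ Nat.count p N + d := Nat.add_le_add_left (Nat.count_le _) _

variable [Fintype α]

/-- The Shannon entropy, in nats, of the distribution of the windows of length `ℓ` starting
before `N`. -/
noncomputable def windowEntropy (x : ℕ → α) (ℓ N : ℕ) : ℝ :=
  ∑ u : Fin ℓ → α, Real.negMulLog (windowFreq x ℓ N u)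

lemma sum_windowCount (x : ℕ → α) (ℓ N : ℕ) : ∑ u, windowCount x ℓ N u = N := by
  simp only [windowCount, Nat.count_eq_card_filter_range]
  rw [← Finset.card_eq_sum_card_fiberwise fun _ _ => Finset.mem_coe.2 (Finset.mem_univ _),
    Finset.card_range]

lemma sum_windowFreq (x : ℕ → α) (ℓ : ℕ) {N : ℕ} (hN : N ≠ 0) :
    ∑ u, windowFreq x ℓ N u = 1 := by
  simp only [windowFreq]
  rw [← Finset.sum_div, ← Nat.cast_sum, sum_windowCount, div_self (Nat.cast_ne_zero.2 hN)]

lemma windowCount_eq_sum_snoc (x : ℕ → α) (ℓ N : ℕ) (u : Fin ℓ → α) :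
    windowCount x ℓ N u = ∑ a, windowCount x (ℓ + 1) N (Fin.snoc u a) := by
  simp only [windowCount_snoc, Nat.count_eq_card_filter_range, ← Finset.filter_filter]
  rw [← Finset.card_eq_sum_card_fiberwise fun _ _ => Finset.mem_coe.2 (Finset.mem_univ _),
    windowCount, Nat.count_eq_card_filter_range]

lemma windowFreq_eq_sum_snoc (x : ℕ → α) (ℓ N : ℕ) (u : Fin ℓ → α) :
    windowFreq x ℓ N u = ∑ a, windowFreq x (ℓ + 1) N (Fin.snoc u a) := by
  simp only [windowFreq]
  rw [windowCount_eq_sum_snoc, Nat.cast_sum, Finset.sum_div]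

lemma windowEntropy_zero (x : ℕ → α) (N : ℕ) : windowEntropy x 0 N = 0 := by
  rcases eq_or_ne N 0 with rfl | hN
  · simp [windowEntropy, windowFreq]
  · have h := sum_windowFreq x 0 hN
    rw [Fintype.sum_unique] at h
    rw [windowEntropy, Fintype.sum_unique, h, Real.negMulLog_one]

end Windows

section BinaryWindows

/-- The conditional frequency `θ_u` of the letter `1` after the word `u`; it is `0` if `u` does not
occur. -/
noncomputable def nextBitFreq (x : ℕ → Bool) (ℓ N : ℕ) (u : Fin ℓ → Bool) : ℝ :=
  windowFreq x (ℓ + 1) N (Fin.snoc u true) / windowFreq x ℓ N u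

/-- The conditional entropy, in nats, of a letter given the `ℓ` preceding ones. -/
noncomputable def condWindowEntropy (x : ℕ → Bool) (ℓ N : ℕ) : ℝ :=
  ∑ u, windowFreq x ℓ N u * Real.binEntropy (nextBitFreq x ℓ N u)

/-- The frequency of errors of the best predictor of a letter from the `ℓ` preceding ones, at the
positions `i + ℓ` with `i < N`; it is `γ_ℓ(x[0:N+ℓ))`. -/
noncomputable def minErrorRate (x : ℕ → Bool) (ℓ N : ℕ) : ℝ :=
  ∑ u, windowFreq x ℓ N u * min (nextBitFreq x ℓ N u) (1 - nextBitFreq x ℓ N u)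

variable (x : ℕ → Bool) (ℓ N : ℕ)

lemma windowFreq_eq_add (u : Fin ℓ → Bool) :
    windowFreq x ℓ N u = windowFreq x (ℓ + 1) N (Fin.snoc u true) +
      windowFreq x (ℓ + 1) N (Fin.snoc u false) := by
  rw [windowFreq_eq_sum_snoc, Fintype.sum_bool]

lemma nextBitFreq_mem_Icc (u : Fin ℓ → Bool) : nextBitFreq x ℓ N u ∈ Set.Icc (0 : ℝ) 1 :=
  ⟨div_nonneg (windowFreq_nonneg ..) (windowFreq_nonneg ..),
    div_le_one_of_le₀ (windowFreq_eq_add x ℓ N u ▸ le_add_of_nonneg_right (windowFreq_nonneg ..))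
      (windowFreq_nonneg ..)⟩

lemma windowFreq_mul_min_nextBitFreq (u : Fin ℓ → Bool) :
    windowFreq x ℓ N u * min (nextBitFreq x ℓ N u) (1 - nextBitFreq x ℓ N u) =
      min (windowFreq x (ℓ + 1) N (Fin.snoc u true))
        (windowFreq x (ℓ + 1) N (Fin.snoc u false)) := by
  have h₁ := windowFreq_nonneg x (ℓ + 1) N (Fin.snoc u true)
  have h₀ := windowFreq_nonneg x (ℓ + 1) N (Fin.snoc u false)
  have hsum := windowFreq_eq_add x ℓ N u
  have htrue : windowFreq x ℓ N u * nextBitFreq x ℓ N u =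
      windowFreq x (ℓ + 1) N (Fin.snoc u true) :=
    mul_div_cancel_of_imp' fun h => by linarith
  rw [mul_min_of_nonneg _ _ (windowFreq_nonneg ..), mul_sub, htrue, mul_one, hsum,
    add_sub_cancel_left]

lemma windowEntropy_succ :
    windowEntropy x (ℓ + 1) N = windowEntropy x ℓ N + condWindowEntropy x ℓ N := by
  simp only [windowEntropy, condWindowEntropy]
  rw [sum_fin_succ_eq_sum_snoc, ← Finset.sum_add_distrib]
  refine Finset.sum_congr rfl fun u _ => ?_
  rw [Fintype.sum_bool, negMulLog_add_negMulLog, ← windowFreq_eq_add, nextBitFreq]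

lemma windowEntropy_eq_sum_condWindowEntropy :
    windowEntropy x ℓ N = ∑ k ∈ Finset.range ℓ, condWindowEntropy x k N := by
  induction ℓ with
  | zero => simp [windowEntropy_zero]
  | succ ℓ ih => rw [windowEntropy_succ, ih, Finset.sum_range_succ]

lemma minErrorRate_mem_Icc : minErrorRate x ℓ N ∈ Set.Icc (0 : ℝ) 2⁻¹ := by
  constructor
  · exact Finset.sum_nonneg fun u _ => mul_nonneg (windowFreq_nonneg ..)
      (le_min (nextBitFreq_mem_Icc x ℓ N u).1 (sub_nonneg.2 (nextBitFreq_mem_Icc x ℓ N u).2))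
  · rcases eq_or_ne N 0 with rfl | hN
    · simp [minErrorRate, windowFreq]
    calc minErrorRate x ℓ N ≤ ∑ u, windowFreq x ℓ N u * 2⁻¹ := by
          refine Finset.sum_le_sum fun u _ =>
            mul_le_mul_of_nonneg_left ?_ (windowFreq_nonneg ..)
          rw [min_le_iff]
          by_contra! h
          linarith
      _ = 2⁻¹ := by rw [← Finset.sum_mul, sum_windowFreq x ℓ hN, one_mul]

lemma two_mul_log_two_mul_minErrorRate_le :
    2 * Real.log 2 * minErrorRate x ℓ N ≤ condWindowEntropy x ℓ N := by
  rw [minErrorRate, condWindowEntropy, Finset.mul_sum]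
  refine Finset.sum_le_sum fun u _ => ?_
  rw [mul_left_comm]
  exact mul_le_mul_of_nonneg_left
    (two_mul_log_two_mul_min_le_binEntropy (nextBitFreq_mem_Icc x ℓ N u)) (windowFreq_nonneg ..)

lemma condWindowEntropy_le_binEntropy :
    condWindowEntropy x ℓ N ≤ Real.binEntropy (minErrorRate x ℓ N) := by
  rcases eq_or_ne N 0 with rfl | hN
  · simp [condWindowEntropy, minErrorRate, windowFreq]
  have jensen := Real.strictConcave_binEntropy.concaveOn.le_map_sum (t := Finset.univ)
    (w := windowFreq x ℓ N) (p := fun u => min (nextBitFreq x ℓ N u) (1 - nextBitFreq x ℓ N u))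
    (fun _ _ => windowFreq_nonneg ..) (sum_windowFreq x ℓ hN) fun u _ => by
      obtain ⟨h0, h1⟩ := nextBitFreq_mem_Icc x ℓ N u
      exact ⟨le_min h0 (sub_nonneg.2 h1), min_le_of_left_le h1⟩
  simpa only [smul_eq_mul, binEntropy_min_one_sub, condWindowEntropy, minErrorRate] using jensen

lemma windowEntropy_mem_Icc : windowEntropy x ℓ N ∈ Set.Icc 0 (ℓ * Real.log 2) := by
  rw [windowEntropy_eq_sum_condWindowEntropy]
  constructor
  · refine Finset.sum_nonneg fun k _ => le_trans ?_ (two_mul_log_two_mul_minErrorRate_le x k N)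
    have := (minErrorRate_mem_Icc x k N).1
    positivity
  · calc ∑ k ∈ Finset.range ℓ, condWindowEntropy x k N
        ≤ ∑ _k ∈ Finset.range ℓ, Real.log 2 := Finset.sum_le_sum fun k _ =>
          (condWindowEntropy_le_binEntropy x k N).trans Real.binEntropy_le_log_two
      _ = ℓ * Real.log 2 := by simp

lemma predictionErrors_eq_sum_windowCount (f : (Fin ℓ → Bool) → Bool) :
    predictionErrors x ℓ N f = ∑ u, windowCount x (ℓ + 1) N (Fin.snoc u (!f u)) := by
  simp only [predictionErrors, windowCount_snoc, Nat.count_eq_card_filter_range]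
  rw [Finset.card_eq_sum_card_fiberwise (f := window x ℓ) (t := Finset.univ)
    fun _ _ => Finset.mem_coe.2 (Finset.mem_univ _)]
  simp only [Finset.filter_filter]
  refine Finset.sum_congr rfl fun u _ => congrArg _ (Finset.filter_congr fun i _ => ?_)
  rw [and_comm, ← Bool.eq_not]
  exact and_congr_right fun h => by rw [h]

lemma predictionErrors_div_eq_sum_windowFreq (f : (Fin ℓ → Bool) → Bool) :
    (predictionErrors x ℓ N f : ℝ) / N = ∑ u, windowFreq x (ℓ + 1) N (Fin.snoc u (!f u)) := by
  rw [predictionErrors_eq_sum_windowCount, Nat.cast_sum, Finset.sum_div]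
  rfl

lemma isLeast_minErrorRate :
    IsLeast (Set.range fun f => (predictionErrors x ℓ N f : ℝ) / N) (minErrorRate x ℓ N) := by
  simp only [minErrorRate, windowFreq_mul_min_nextBitFreq, predictionErrors_div_eq_sum_windowFreq]
  constructor
  · refine ⟨fun u => decide (windowFreq x (ℓ + 1) N (Fin.snoc u false) ≤
      windowFreq x (ℓ + 1) N (Fin.snoc u true)), Finset.sum_congr rfl fun u _ => ?_⟩
    by_cases h : windowFreq x (ℓ + 1) N (Fin.snoc u false) ≤
        windowFreq x (ℓ + 1) N (Fin.snoc u true)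
    · simp only [h, decide_true, Bool.not_true, min_eq_right]
    · simp only [h, decide_false, Bool.not_false, min_eq_left (le_of_not_ge h)]
  · rintro _ ⟨f, rfl⟩
    refine Finset.sum_le_sum fun u _ => ?_
    cases f u
    · exact min_le_left _ _
    · exact min_le_right _ _

lemma minErrorRate_add_le (d : ℕ) :
    minErrorRate x (d + ℓ) N ≤ minErrorRate x ℓ N + d / N := by
  obtain ⟨f, hf⟩ := (isLeast_minErrorRate x ℓ N).1
  calc minErrorRate x (d + ℓ) N
      ≤ (predictionErrors x (d + ℓ) N fun v => f fun j => v (Fin.natAdd d j) : ℝ) / N :=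
        (isLeast_minErrorRate x (d + ℓ) N).2 ⟨_, rfl⟩
    _ ≤ (predictionErrors x ℓ N f + d : ℝ) / N := by
        gcongr
        exact_mod_cast predictionErrors_natAdd_le x d ℓ N f
    _ = minErrorRate x ℓ N + d / N := by rw [add_div, ← hf]

lemma gammaWord_add : gammaWord ℓ x (N + ℓ) = minErrorRate x ℓ N := by
  have errors_eq (f : (Fin ℓ → Bool) → Bool) :
      ((Finset.Ico ℓ (N + ℓ)).filter fun i => x i ≠ f fun j => x (i - ℓ + j)).card =
        predictionErrors x ℓ N f := by
    rw [Finset.card_filter, Finset.sum_Ico_eq_sum_range, predictionErrors,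
      Nat.count_eq_card_filter_range, Finset.card_filter, Nat.add_sub_cancel]
    simp only [Nat.add_comm ℓ, Nat.add_sub_cancel]
    rfl
  simp only [gammaWord, errors_eq, Nat.cast_add, add_sub_cancel_right]
  rw [one_div_mul_eq_div]
  obtain ⟨⟨f, hf⟩, hmin⟩ := isLeast_minErrorRate x ℓ N
  apply le_antisymm
  · rw [← hf]
    exact div_le_div_of_nonneg_right (Finset.inf'_le _ (Finset.mem_univ f)) (by positivity)
  · obtain ⟨g, -, hg⟩ := Finset.exists_mem_eq_inf' Finset.univ_nonempty
      fun g : (Fin ℓ → Bool) → Bool => (predictionErrors x ℓ N g : ℝ)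
    rw [hg]
    exact hmin ⟨g, rfl⟩

lemma hBlock_add :
    hBlock ℓ x (N + ℓ) = windowEntropy x ℓ (N + 1) * (ℓ * Real.log 2)⁻¹ := by
  have occ_eq (u : Fin ℓ → Bool) : occ x (N + ℓ) (List.ofFn u) = windowCount x ℓ (N + 1) u := by
    rw [occ, windowCount, Nat.count_eq_card_filter_range, List.length_ofFn,
      show N + ℓ + 1 - ℓ = N + 1 by omega]
    simp only [factor, List.ofFn_inj]
    rfl
  have length_eq : ((N + ℓ : ℕ) : ℝ) - ℓ + 1 = (N + 1 : ℕ) := by push_cast; ring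
  simp only [hBlock, windowEntropy, windowFreq, occ_eq, length_eq, Real.negMulLog, Real.logb]
  rw [Finset.sum_mul, Finset.mul_sum]
  refine Finset.sum_congr rfl fun u _ => ?_
  rw [mul_inv]
  ring

end BinaryWindows

section Asymptotics

/-- The number `γ̄_ℓ(x)`, with the prefixes indexed by the number `N` of predicted letters. -/
noncomputable def upperErrorRate (x : ℕ → Bool) (ℓ : ℕ) : ℝ :=
  limsup (fun N => minErrorRate x ℓ N) atTop

variable (x : ℕ → Bool)

lemma limsup_gammaWord (ℓ : ℕ) : limsup (gammaWord ℓ x) atTop = upperErrorRate x ℓ := by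
  rw [← limsup_nat_add _ ℓ]
  simp only [gammaWord_add, upperErrorRate]

lemma upperErrorRate_mem_Icc (ℓ : ℕ) : upperErrorRate x ℓ ∈ Set.Icc (0 : ℝ) 2⁻¹ :=
  limsup_mem_Icc (minErrorRate_mem_Icc x ℓ)

lemma antitone_upperErrorRate : Antitone (upperErrorRate x) := by
  refine antitone_nat_of_succ_le fun ℓ => limsup_le_limsup_of_le_add_tendsto_zero
    (isCoboundedUnder_le_of_le _ fun N => (minErrorRate_mem_Icc x (ℓ + 1) N).1)
    (isBoundedUnder_of ⟨_, fun N => (minErrorRate_mem_Icc x ℓ N).2⟩)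
    (isBoundedUnder_of ⟨_, fun N => (minErrorRate_mem_Icc x ℓ N).1⟩)
    (tendsto_const_div_atTop_nhds_zero_nat ((1 : ℕ) : ℝ)) (Eventually.of_forall fun N => ?_)
  rw [Nat.add_comm ℓ]
  exact minErrorRate_add_le x ℓ N 1

lemma tendsto_upperErrorRate : Tendsto (upperErrorRate x) atTop (𝓝 (gammaUp x)) := by
  have hlim : Tendsto (upperErrorRate x) atTop (𝓝 (⨅ ℓ, upperErrorRate x ℓ)) :=
    tendsto_atTop_ciInf (antitone_upperErrorRate x)
      ⟨0, Set.forall_mem_range.2 fun ℓ => (upperErrorRate_mem_Icc x ℓ).1⟩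
  have hgamma : gammaUp x = limsup (upperErrorRate x) atTop := by
    simp only [gammaUp, limsup_gammaWord]
  rwa [hgamma, hlim.limsup_eq]

lemma limsup_hBlock (ℓ : ℕ) :
    limsup (hBlock ℓ x) atTop =
      limsup (fun N => windowEntropy x ℓ N) atTop * (ℓ * Real.log 2)⁻¹ := by
  rw [← limsup_nat_add _ ℓ, ← limsup_nat_add (fun N => windowEntropy x ℓ N) 1]
  simp only [hBlock_add]
  exact limsup_mul_const_of_nonneg (by positivity)
    (isBoundedUnder_of ⟨_, fun N => (windowEntropy_mem_Icc x ℓ (N + 1)).2⟩)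
    (isBoundedUnder_of ⟨_, fun N => (windowEntropy_mem_Icc x ℓ (N + 1)).1⟩)

lemma mul_minErrorRate_le_windowEntropy_add (ℓ N : ℕ) :
    minErrorRate x ℓ N * (2 * Real.log 2 * ℓ) ≤
      windowEntropy x ℓ N + 2 * Real.log 2 * ℓ * ℓ / N := by
  have hk : ∀ k ∈ Finset.range ℓ,
      2 * Real.log 2 * (minErrorRate x ℓ N - ℓ / N) ≤ condWindowEntropy x k N := by
    intro k hk
    refine le_trans ?_ (two_mul_log_two_mul_minErrorRate_le x k N)
    gcongr
    rw [sub_le_iff_le_add]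
    calc minErrorRate x ℓ N ≤ minErrorRate x k N + (ℓ - k : ℕ) / N := by
          simpa only [Nat.sub_add_cancel (Finset.mem_range.1 hk).le] using
            minErrorRate_add_le x k N (ℓ - k)
      _ ≤ minErrorRate x k N + ℓ / N := by gcongr; exact Nat.sub_le ℓ k
  have hsum := Finset.card_nsmul_le_sum _ _ _ hk
  rw [Finset.card_range, nsmul_eq_mul, ← windowEntropy_eq_sum_condWindowEntropy] at hsum
  rw [← sub_le_iff_le_add]
  refine le_of_eq_of_le ?_ hsum
  ring

lemma two_mul_upperErrorRate_le_limsup_hBlock {ℓ : ℕ} (hℓ : ℓ ≠ 0) :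
    2 * upperErrorRate x ℓ ≤ limsup (hBlock ℓ x) atTop := by
  rw [limsup_hBlock, ← div_eq_mul_inv, le_div_iff₀ (by positivity)]
  calc 2 * upperErrorRate x ℓ * (ℓ * Real.log 2)
      = upperErrorRate x ℓ * (2 * Real.log 2 * ℓ) := by ring
    _ = limsup (fun N => minErrorRate x ℓ N * (2 * Real.log 2 * ℓ)) atTop :=
        (limsup_mul_const_of_nonneg (by positivity)
          (isBoundedUnder_of ⟨_, fun N => (minErrorRate_mem_Icc x ℓ N).2⟩)
          (isBoundedUnder_of ⟨_, fun N => (minErrorRate_mem_Icc x ℓ N).1⟩)).symm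
    _ ≤ limsup (fun N => windowEntropy x ℓ N) atTop :=
        limsup_le_limsup_of_le_add_tendsto_zero
          (isCoboundedUnder_le_of_le _ fun N =>
            mul_nonneg (minErrorRate_mem_Icc x ℓ N).1 (by positivity))
          (isBoundedUnder_of ⟨_, fun N => (windowEntropy_mem_Icc x ℓ N).2⟩)
          (isBoundedUnder_of ⟨_, fun N => (windowEntropy_mem_Icc x ℓ N).1⟩)
          (tendsto_const_div_atTop_nhds_zero_nat _)
          (Eventually.of_forall (mul_minErrorRate_le_windowEntropy_add x ℓ))

lemma limsup_binEntropy_minErrorRate (ℓ : ℕ) :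
    limsup (fun N => Real.binEntropy (minErrorRate x ℓ N)) atTop =
      Real.binEntropy (upperErrorRate x ℓ) :=
  (map_limsup_of_monotoneOn_Icc Real.binEntropy_strictMonoOn.monotoneOn
    Real.binEntropy_continuous.continuousOn (minErrorRate_mem_Icc x ℓ)).symm

lemma limsup_windowEntropy_le (ℓ : ℕ) :
    limsup (fun N => windowEntropy x ℓ N) atTop ≤
      ∑ k ∈ Finset.range ℓ, Real.binEntropy (upperErrorRate x k) := by
  have hle (k : ℕ) :
      atTop.IsBoundedUnder (· ≤ ·) fun N => Real.binEntropy (minErrorRate x k N) :=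
    isBoundedUnder_of ⟨_, fun _ => Real.binEntropy_le_log_two⟩
  have hge (k : ℕ) :
      atTop.IsBoundedUnder (· ≥ ·) fun N => Real.binEntropy (minErrorRate x k N) :=
    isBoundedUnder_of ⟨0, fun N => Real.binEntropy_nonneg (minErrorRate_mem_Icc x k N).1
      ((minErrorRate_mem_Icc x k N).2.trans (by norm_num))⟩
  calc limsup (fun N => windowEntropy x ℓ N) atTop
      ≤ limsup (∑ k ∈ Finset.range ℓ, fun N => Real.binEntropy (minErrorRate x k N)) atTop := by
        refine limsup_le_limsup (Eventually.of_forall fun N => ?_)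
          (isCoboundedUnder_le_of_le _ fun N => (windowEntropy_mem_Icc x ℓ N).1)
          (isBoundedUnder_le_sum _ fun k _ => hle k)
        simp only [windowEntropy_eq_sum_condWindowEntropy, Finset.sum_apply]
        exact Finset.sum_le_sum fun k _ => condWindowEntropy_le_binEntropy x k N
    _ ≤ ∑ k ∈ Finset.range ℓ, limsup (fun N => Real.binEntropy (minErrorRate x k N)) atTop :=
        limsup_finset_sum_le _ (fun k _ => hle k) fun k _ => hge k
    _ = ∑ k ∈ Finset.range ℓ, Real.binEntropy (upperErrorRate x k) := by
        simp only [limsup_binEntropy_minErrorRate]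

lemma limsup_hBlock_le (ℓ : ℕ) :
    limsup (hBlock ℓ x) atTop ≤
      (ℓ : ℝ)⁻¹ * ∑ k ∈ Finset.range ℓ, binEntropy (upperErrorRate x k) := by
  simp only [limsup_hBlock, binEntropy_eq_div_log_two]
  rw [← Finset.sum_div, mul_inv, mul_left_comm, div_eq_mul_inv]
  gcongr
  exact limsup_windowEntropy_le x ℓ

end Asymptotics

theorem rauzy_upper_gamma_limsup (x : ℕ → Bool) :
    2 * gammaUp x ≤ hUp x ∧ hUp x ≤ binEntropy (gammaUp x) := by
  have hgamma := tendsto_upperErrorRate x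
  have hcesaro : Tendsto
      (fun ℓ : ℕ => (ℓ : ℝ)⁻¹ * ∑ k ∈ Finset.range ℓ, binEntropy (upperErrorRate x k)) atTop
      (𝓝 (binEntropy (gammaUp x))) :=
    ((continuous_binEntropy.tendsto _).comp hgamma).cesaro
  exact limsup_mem_Icc_of_tendsto (hgamma.const_mul 2) hcesaro
    ((eventually_ne_atTop 0).mono fun _ => two_mul_upperErrorRate_le_limsup_hBlock x)
    (Eventually.of_forall (limsup_hBlock_le x))
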